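/- Let ψ be a 3CNF formula with n propositional variables and m clauses, where clause j consists of three literals ℓ_{j,1}, ℓ_{j,2}, ℓ_{j,3}, each a pair of a variable index i ∈ {1,…,n} and a sign. For x ∈ ℝⁿ let val_{j,k}(x) = x_i if literal ℓ_{j,k} is the positive literal of variable i and val_{j,k}(x) = 1 − x_i if it is the negative literal of variable i, and define N'(x) = Σ_{i=1}^{n} (ReLU(1/2 − x_i) + ReLU(x_i − 1/2)) − Σ_{j=1}^{m} ReLU(1 − val_{j,1}(x) − val_{j,2}(x) − val_{j,3}(x)). Then there exists x ∈ ℝⁿ with 0 ≤ x_i ≤ 1 for all i and N'(x) = n/2, if and only if ψ is satisfiable, i.e., there is an assignment α : {1,…,n} → {0,1} such that every clause contains a literal whose variable is assigned 1 if the literal is positive and 0 if it is negative. -/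

import Mathlib

/-- The ReLU function. -/
noncomputable def ReLU (x : ℝ) : ℝ := max 0 x

/-- The real value of a literal (a variable index together with a sign, `true`
meaning positive) under a real-valued input `x`: `x i` for the positive
literal of variable `i` and `1 - x i` for the negative one. -/
noncomputable def litVal {n : ℕ} (ℓ : Fin n × Bool) (x : Fin n → ℝ) : ℝ :=
  if ℓ.2 then x ℓ.1 else 1 - x ℓ.1

/-- A boolean assignment satisfies a literal if the variable is assigned `true`
(i.e. 1) when the literal is positive and `false` (i.e. 0) when it is negative. -/
def litSat {n : ℕ} (ℓ : Fin n × Bool) (α : Fin n → Bool) : Prop :=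
  α ℓ.1 = ℓ.2

/-- The single-hidden-layer network `N'` built from a 3CNF formula with `n`
variables and `m` clauses given by `lit`. -/
noncomputable def N' {n m : ℕ} (lit : Fin m → Fin 3 → Fin n × Bool)
    (x : Fin n → ℝ) : ℝ :=
  (∑ i : Fin n, (ReLU (1/2 - x i) + ReLU (x i - 1/2))) -
    ∑ j : Fin m,
      ReLU (1 - litVal (lit j 0) x - litVal (lit j 1) x - litVal (lit j 2) x)

/-! On the cube `[0, 1]ⁿ` the two ReLU nodes of variable `i` add up to `|x i - 1/2| ≤ 1/2`, with
equality exactly at `x i = 0` and `x i = 1`, while every clause only subtracts a nonnegative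
penalty. The value `n / 2` is thus an upper bound of `N'`, attained exactly when `x` is a vertex
of the cube and no penalty is incurred. At a vertex the values of the three literals of a clause
sum to the number of satisfied ones, so the penalty vanishes iff at least one is satisfied. -/

theorem sum_sub_sum_eq_sum_iff_of_le_of_nonneg {ι κ M : Type*} [AddCommGroup M] [PartialOrder M]
    [IsOrderedAddMonoid M] {s : Finset ι} {t : Finset κ} {f c : ι → M} {g : κ → M}
    (hfc : ∀ i ∈ s, f i ≤ c i) (hg : ∀ j ∈ t, 0 ≤ g j) :
    ∑ i ∈ s, f i - ∑ j ∈ t, g j = ∑ i ∈ s, c i ↔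
      (∀ i ∈ s, f i = c i) ∧ ∀ j ∈ t, g j = 0 := by
  rw [← Finset.sum_eq_sum_iff_of_le hfc, ← Finset.sum_eq_zero_iff_of_nonneg hg]
  have hf_le : ∑ i ∈ s, f i ≤ ∑ i ∈ s, c i := Finset.sum_le_sum hfc
  have hg_nonneg : 0 ≤ ∑ j ∈ t, g j := Finset.sum_nonneg hg
  constructor
  · intro h
    have hf : ∑ i ∈ s, f i = ∑ i ∈ s, c i := hf_le.antisymm (h ▸ sub_le_self _ hg_nonneg)
    exact ⟨hf, by rwa [hf, sub_eq_self] at h⟩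
  · rintro ⟨hf, hg⟩
    rw [hf, hg, sub_zero]

theorem one_le_sum_boole_iff {ι R : Type*} [Semiring R] [PartialOrder R]
    [IsStrictOrderedRing R] {s : Finset ι} {p : ι → Prop} [DecidablePred p] :
    1 ≤ ∑ i ∈ s, (if p i then 1 else 0 : R) ↔ ∃ i ∈ s, p i := by
  rw [Finset.sum_boole, Nat.one_le_cast, Nat.one_le_iff_ne_zero, Finset.card_ne_zero,
    Finset.filter_nonempty_iff]

section DistanceToHalf

variable {K : Type*} [Field K] [LinearOrder K] [IsStrictOrderedRing K] {x : K}

theorem abs_sub_half_le_half_iff : |x - 1 / 2| ≤ 1 / 2 ↔ 0 ≤ x ∧ x ≤ 1 := by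
  rw [abs_le, neg_le_sub_iff_le_add, le_add_iff_nonneg_left, sub_le_iff_le_add, add_halves]

theorem abs_sub_half_eq_half_iff : |x - 1 / 2| = 1 / 2 ↔ x = 0 ∨ x = 1 := by
  rw [abs_eq one_half_pos.le, sub_eq_iff_eq_add, sub_eq_iff_eq_add, add_halves, neg_add_cancel,
    or_comm]

end DistanceToHalf

theorem ReLU_nonneg (x : ℝ) : 0 ≤ ReLU x := le_max_left 0 x

theorem ReLU_eq_zero_iff {x : ℝ} : ReLU x = 0 ↔ x ≤ 0 := max_eq_left_iff

theorem ReLU_sub_add_ReLU_sub (a b : ℝ) : ReLU (a - b) + ReLU (b - a) = |b - a| := by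
  rw [ReLU, ReLU, max_comm, max_comm 0, ← neg_sub b a, add_comm,
    max_zero_add_max_neg_zero_eq_abs_self]

/-- The vertex of the unit cube that corresponds to a boolean assignment, with `true` and `false`
encoded as `1` and `0`. -/
def cubeVertex {ι : Type*} (α : ι → Bool) (i : ι) : ℝ := if α i then 1 else 0

theorem cubeVertex_mem_unitCube {ι : Type*} (α : ι → Bool) (i : ι) :
    0 ≤ cubeVertex α i ∧ cubeVertex α i ≤ 1 := by
  unfold cubeVertex
  split_ifs <;> norm_num

theorem mem_range_cubeVertex_iff {ι : Type*} {x : ι → ℝ} :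
    x ∈ Set.range cubeVertex ↔ ∀ i, x i = 0 ∨ x i = 1 := by
  constructor
  · rintro ⟨α, rfl⟩ i
    exact (ite_eq_or_eq (α i = true) 1 0).symm
  · intro hx
    refine ⟨fun i => decide (x i = 1), funext fun i => ?_⟩
    rcases hx i with h | h <;> simp [cubeVertex, h]

theorem litVal_cubeVertex {n : ℕ} (ℓ : Fin n × Bool) (α : Fin n → Bool) [Decidable (litSat ℓ α)] :
    litVal ℓ (cubeVertex α) = if litSat ℓ α then 1 else 0 := by
  obtain ⟨i, sign⟩ := ℓ
  cases sign <;> cases h : α i <;> simp [litVal, litSat, cubeVertex, h]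

theorem one_le_sum_litVal_cubeVertex_iff {n : ℕ} {κ : Type*} [Fintype κ] (c : κ → Fin n × Bool)
    (α : Fin n → Bool) :
    1 ≤ ∑ k, litVal (c k) (cubeVertex α) ↔ ∃ k, litSat (c k) α := by
  classical
  simp only [litVal_cubeVertex, one_le_sum_boole_iff, Finset.mem_univ, true_and]

theorem N'_eq_sum_abs_sub_sum_ReLU {n m : ℕ} (lit : Fin m → Fin 3 → Fin n × Bool)
    (x : Fin n → ℝ) :
    N' lit x = ∑ i, |x i - 1 / 2| - ∑ j, ReLU (1 - ∑ k, litVal (lit j k) x) := by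
  simp only [N', ReLU_sub_add_ReLU_sub, Fin.sum_univ_three, sub_sub]

theorem N'_eq_half_iff {n m : ℕ} (lit : Fin m → Fin 3 → Fin n × Bool) {x : Fin n → ℝ}
    (hx : ∀ i, 0 ≤ x i ∧ x i ≤ 1) :
    N' lit x = n / 2 ↔ x ∈ Set.range cubeVertex ∧ ∀ j, 1 ≤ ∑ k, litVal (lit j k) x := by
  have sum_half : (n / 2 : ℝ) = ∑ _i : Fin n, 1 / 2 := by
    rw [Fin.sum_const, nsmul_eq_mul, mul_one_div]
  rw [N'_eq_sum_abs_sub_sum_ReLU, sum_half, sum_sub_sum_eq_sum_iff_of_le_of_nonneg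
    (fun i _ => abs_sub_half_le_half_iff.2 (hx i)) (fun _ _ => ReLU_nonneg _)]
  simp only [Finset.mem_univ, true_imp_iff, abs_sub_half_eq_half_iff, mem_range_cubeVertex_iff,
    ReLU_eq_zero_iff, sub_nonpos]

theorem stmt_6 (n m : ℕ) (lit : Fin m → Fin 3 → Fin n × Bool) :
    (∃ x : Fin n → ℝ, (∀ i : Fin n, 0 ≤ x i ∧ x i ≤ 1) ∧ N' lit x = n / 2) ↔
    (∃ α : Fin n → Bool, ∀ j : Fin m, ∃ k : Fin 3, litSat (lit j k) α) := by
  constructor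
  · rintro ⟨x, hx, hN⟩
    obtain ⟨⟨α, rfl⟩, hclauses⟩ := (N'_eq_half_iff lit hx).1 hN
    exact ⟨α, fun j => (one_le_sum_litVal_cubeVertex_iff (lit j) α).1 (hclauses j)⟩
  · rintro ⟨α, hα⟩
    have hclauses (j : Fin m) : 1 ≤ ∑ k, litVal (lit j k) (cubeVertex α) :=
      (one_le_sum_litVal_cubeVertex_iff (lit j) α).2 (hα j)
    have hcube := cubeVertex_mem_unitCube α
    exact ⟨cubeVertex α, hcube, (N'_eq_half_iff lit hcube).2 ⟨⟨α, rfl⟩, hclauses⟩⟩
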